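/- Let n ≥ 1 and s ∈ (0,1). For every Schwartz function u : ℝⁿ → ℂ, ∫_{ℝⁿ} |ξ|^{2s} |𝓕u(ξ)|² dξ = c_{n,s} ∬_{ℝⁿ×ℝⁿ} |u(x)-u(y)|² / |x-y|^{n+2s} dx dy, where c_{n,s} = 2^{2s-1} π^{-n/2} Γ((n+2s)/2) / |Γ(-s)|. -/

import Mathlib

open MeasureTheory Real Filter
open scoped RealInnerProductSpace ENNReal

/-- The Fourier transform with the convention
`𝓕u(ξ) = (2π)^{-n/2} ∫ e^{-i⟨ξ,x⟩} u(x) dx`. -/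
noncomputable def FT {n : ℕ} (u : EuclideanSpace ℝ (Fin n) → ℂ)
    (ξ : EuclideanSpace ℝ (Fin n)) : ℂ :=
  (((2 * Real.pi) ^ (-(n : ℝ) / 2) : ℝ) : ℂ) *
    ∫ x : EuclideanSpace ℝ (Fin n),
      Complex.exp (-Complex.I * ((⟪ξ, x⟫ : ℝ) : ℂ)) * u x

/-- The constant `c_{n,s} = 2^{2s-1} π^{-n/2} Γ((n+2s)/2) / |Γ(-s)|`. -/
noncomputable def cns (n : ℕ) (s : ℝ) : ℝ :=
  2 ^ (2 * s - 1) * Real.pi ^ (-(n : ℝ) / 2) * Real.Gamma (((n : ℝ) + 2 * s) / 2) /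
    |Real.Gamma (-s)|

open scoped FourierTransform

/-!
Translating `u` by `h` multiplies its Fourier transform by a character, so Plancherel turns
`∫ |u(x) - u(x + h)|² dx` into `∫ 2 (1 - cos ⟨ξ, h⟩) |𝓕u(ξ)|² dξ`. By Tonelli, the identity then
reduces to the value of `∫ (1 - cos ⟨ξ, h⟩) / |h|^{n+2s} dh`, which is computed by writing
`|h|^{-(n+2s)}` as a superposition of Gaussians, whose Fourier transforms are known. Plancherel
holds in `[0, ∞]` for every integrable `u`: testing `∫ 𝓕φ · u = ∫ φ · 𝓕u` against Schwartz `φ`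
shows that `𝓕u ∈ L²` exactly when `u ∈ L²`, and that `𝓕u` is then the `L²` Fourier transform.
-/

section HalfLine

lemma lintegral_Ioi_eq_lintegral_comp_inv (g : ℝ → ℝ≥0∞) :
    ∫⁻ t in Set.Ioi (0 : ℝ), g t =
      ∫⁻ r in Set.Ioi (0 : ℝ), ENNReal.ofReal ((r ^ 2)⁻¹) * g r⁻¹ := by
  have himage : (fun r : ℝ => r⁻¹) '' Set.Ioi 0 = Set.Ioi 0 := by
    ext r
    simp
  conv_lhs => rw [← himage]
  rw [lintegral_image_eq_lintegral_abs_deriv_mul measurableSet_Ioi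
    (fun x hx => (hasDerivAt_inv (ne_of_gt hx)).hasDerivWithinAt) inv_injective.injOn]
  refine setLIntegral_congr_fun measurableSet_Ioi fun r _ => ?_
  simp only [abs_neg]
  rw [abs_of_nonneg (by positivity)]

lemma lintegral_rpow_mul_exp_neg_mul_Ioi {a r : ℝ} (ha : 0 < a) (hr : 0 < r) :
    ∫⁻ t in Set.Ioi (0 : ℝ), ENNReal.ofReal (t ^ (a - 1) * exp (-(r * t))) =
      ENNReal.ofReal ((1 / r) ^ a * Gamma a) := by
  have hintegral := integral_rpow_mul_exp_neg_mul_Ioi ha hr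
  have hpos : 0 < (1 / r) ^ a * Gamma a := mul_pos (by positivity) (Gamma_pos_of_pos ha)
  rw [← hintegral, ofReal_integral_eq_lintegral_ofReal]
  · exact .of_integral_ne_zero (by rw [hintegral]; exact hpos.ne')
  · filter_upwards [ae_restrict_mem measurableSet_Ioi] with t (ht : 0 < t)
    simp only [Pi.zero_apply]
    positivity

lemma lintegral_rpow_mul_exp_neg_div_Ioi {a c : ℝ} (ha : 0 < a) (hc : 0 < c) :
    ∫⁻ t in Set.Ioi (0 : ℝ), ENNReal.ofReal (t ^ (-a - 1) * exp (-(c / t))) =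
      ENNReal.ofReal ((1 / c) ^ a * Gamma a) := by
  rw [lintegral_Ioi_eq_lintegral_comp_inv, ← lintegral_rpow_mul_exp_neg_mul_Ioi ha hc]
  refine setLIntegral_congr_fun measurableSet_Ioi fun r (hr : 0 < r) => ?_
  have hpow : (r ^ 2)⁻¹ * r⁻¹ ^ (-a - 1) = r ^ (a - 1) := by
    rw [inv_rpow hr.le, ← rpow_neg hr.le, ← rpow_two, ← rpow_neg hr.le, ← rpow_add hr]
    congr 1
    ring
  simp only [div_inv_eq_mul]
  rw [← ENNReal.ofReal_mul (by positivity), ← mul_assoc, hpow]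

lemma lintegral_Ioc_exp_neg_mul {b r : ℝ} (hb : 0 ≤ b) (hr : 0 ≤ r) :
    ∫⁻ v in Set.Ioc 0 b, ENNReal.ofReal (r * exp (-(v * r))) =
      ENNReal.ofReal (1 - exp (-(b * r))) := by
  have hderiv (v : ℝ) : HasDerivAt (fun v : ℝ => -exp (-(v * r))) (r * exp (-(v * r))) v := by
    convert! (hasDerivAt_mul_const (x := v) r).neg.exp.neg using 1
    simp only [Pi.neg_apply]
    ring_nf
  have hcont : Continuous fun v : ℝ => r * exp (-(v * r)) := by fun_prop
  have hFTC : ∫ v in (0 : ℝ)..b, r * exp (-(v * r)) = 1 - exp (-(b * r)) := by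
    rw [intervalIntegral.integral_eq_sub_of_hasDerivAt (fun v _ => hderiv v)
      (hcont.intervalIntegrable _ _)]
    simp [neg_add_eq_sub]
  rw [← hFTC, intervalIntegral.integral_of_le hb, ofReal_integral_eq_lintegral_ofReal
    (hcont.integrableOn_Icc.mono_set Set.Ioc_subset_Icc_self)
    (ae_of_all _ fun v => mul_nonneg hr (exp_pos _).le)]

lemma lintegral_Ioc_rpow {b p : ℝ} (hb : 0 ≤ b) (hp : -1 < p) :
    ∫⁻ v in Set.Ioc 0 b, ENNReal.ofReal (v ^ p) = ENNReal.ofReal (b ^ (p + 1) / (p + 1)) := by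
  have hintegrable : IntegrableOn (fun v : ℝ => v ^ p) (Set.Ioc 0 b) :=
    (intervalIntegrable_iff_integrableOn_Ioc_of_le hb).1
      (intervalIntegral.intervalIntegrable_rpow' hp)
  have hnonneg : 0 ≤ᵐ[volume.restrict (Set.Ioc 0 b)] fun v : ℝ => v ^ p := by
    filter_upwards [ae_restrict_mem measurableSet_Ioc] with v hv
    exact rpow_nonneg hv.1.le _
  rw [← ofReal_integral_eq_lintegral_ofReal hintegrable hnonneg,
    ← intervalIntegral.integral_of_le hb, integral_rpow (.inl hp),
    zero_rpow (by linarith), sub_zero]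

lemma abs_Gamma_neg {s : ℝ} (hs : s ∈ Set.Ioo (0 : ℝ) 1) : |Gamma (-s)| = Gamma (1 - s) / s := by
  have hΓ : 0 < Gamma (1 - s) := Gamma_pos_of_pos (by linarith [hs.2])
  have hrec : Gamma (1 - s) = -s * Gamma (-s) := by
    rw [← Gamma_add_one (neg_ne_zero.2 hs.1.ne'), neg_add_eq_sub]
  rw [eq_div_iff hs.1.ne', ← abs_of_pos hΓ, hrec, abs_mul, abs_neg, abs_of_pos hs.1, mul_comm]

lemma lintegral_rpow_mul_one_sub_exp_neg_mul_Ioi {b s : ℝ} (hb : 0 ≤ b)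
    (hs : s ∈ Set.Ioo (0 : ℝ) 1) :
    ∫⁻ t in Set.Ioi (0 : ℝ), ENNReal.ofReal (t ^ (-s - 1) * (1 - exp (-(b * t)))) =
      ENNReal.ofReal (|Gamma (-s)| * b ^ s) := by
  have hΓ : 0 ≤ Gamma (1 - s) := (Gamma_pos_of_pos (by linarith [hs.2])).le
  calc
    _ = ∫⁻ t in Set.Ioi (0 : ℝ), ∫⁻ v in Set.Ioc 0 b,
          ENNReal.ofReal (t ^ (1 - s - 1) * exp (-(v * t))) := by
      refine setLIntegral_congr_fun measurableSet_Ioi fun t (ht : 0 < t) => ?_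
      have hpow : t ^ (1 - s - 1) = t ^ (-s - 1) * t := by
        rw [← rpow_add_one ht.ne']
        ring_nf
      simp only [hpow, mul_assoc, ENNReal.ofReal_mul (rpow_nonneg ht.le (-s - 1))]
      rw [lintegral_const_mul _ (by fun_prop), lintegral_Ioc_exp_neg_mul hb ht.le]
    _ = ∫⁻ v in Set.Ioc 0 b, ∫⁻ t in Set.Ioi (0 : ℝ),
          ENNReal.ofReal (t ^ (1 - s - 1) * exp (-(v * t))) :=
      lintegral_lintegral_swap (by fun_prop)
    _ = ∫⁻ v in Set.Ioc 0 b, ENNReal.ofReal (Gamma (1 - s)) * ENNReal.ofReal (v ^ (s - 1)) := by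
      refine setLIntegral_congr_fun measurableSet_Ioc fun v hv => ?_
      rw [lintegral_rpow_mul_exp_neg_mul_Ioi (by linarith [hs.2]) hv.1,
        ← ENNReal.ofReal_mul hΓ, one_div, inv_rpow hv.1.le, ← rpow_neg hv.1.le, mul_comm,
        neg_sub]
    _ = _ := by
      rw [lintegral_const_mul _ (by fun_prop), lintegral_Ioc_rpow hb (by linarith [hs.1]),
        ← ENNReal.ofReal_mul hΓ, sub_add_cancel, abs_Gamma_neg hs,
        mul_div_left_comm, mul_comm]

end HalfLine

lemma cns_pos (n : ℕ) {s : ℝ} (hs : s ∈ Set.Ioo (0 : ℝ) 1) : 0 < cns n s := by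
  have hs0 : 0 < s := hs.1
  have hΓ : 0 < Gamma (1 - s) := Gamma_pos_of_pos (by linarith [hs.2])
  have : 0 < Gamma (((n : ℝ) + 2 * s) / 2) := Gamma_pos_of_pos (by positivity)
  rw [cns, abs_Gamma_neg hs]
  positivity

section Symbol

lemma ofReal_div_norm_rpow_eq_lintegral {E : Type*} [NormedAddCommGroup E] {a c : ℝ} (ha : 0 < a)
    {x : E} (hc : x = 0 → c = 0) :
    ENNReal.ofReal (c / ‖x‖ ^ (2 * a)) = ∫⁻ t in Set.Ioi (0 : ℝ),
      ENNReal.ofReal (t ^ (-a - 1) / Gamma a) * ENNReal.ofReal (exp (-t⁻¹ * ‖x‖ ^ 2) * c) := by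
  rcases eq_or_ne x 0 with rfl | hx
  · simp [hc rfl]
  have hx0 : 0 < ‖x‖ := norm_pos_iff.2 hx
  have : 0 < Gamma a := Gamma_pos_of_pos ha
  calc
    _ = ENNReal.ofReal ((1 / ‖x‖ ^ 2) ^ a * Gamma a) * ENNReal.ofReal (c / Gamma a) := by
      rw [← ENNReal.ofReal_mul (by positivity), one_div, inv_rpow (by positivity),
        ← rpow_two, ← rpow_mul hx0.le]
      field_simp
    _ = _ := by
      rw [← lintegral_rpow_mul_exp_neg_div_Ioi ha (by positivity),
        ← lintegral_mul_const _ (by fun_prop)]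
      refine setLIntegral_congr_fun measurableSet_Ioi fun t (ht : 0 < t) => ?_
      rw [← ENNReal.ofReal_mul (by positivity), ← ENNReal.ofReal_mul (by positivity)]
      ring_nf

variable {V : Type*} [NormedAddCommGroup V] [InnerProductSpace ℝ V] [FiniteDimensional ℝ V]
  [MeasurableSpace V] [BorelSpace V]

lemma integral_exp_neg_mul_sq_norm_mul_cos {b : ℝ} (hb : 0 < b) (w : V) :
    ∫ h : V, exp (-b * ‖h‖ ^ 2) * cos ⟪w, h⟫ =
      (π / b) ^ (Module.finrank ℝ V / 2 : ℝ) * exp (-(‖w‖ ^ 2 / (4 * b))) := by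
  have hre (h : V) : exp (-b * ‖h‖ ^ 2) * cos ⟪w, h⟫ =
      Complex.reCLM (Complex.exp (-b * ‖h‖ ^ 2 + Complex.I * ⟪w, h⟫)) := by
    simp [Complex.exp_re, ← Complex.ofReal_pow]
  have hvalue : ((π : ℂ) / b) ^ (Module.finrank ℝ V / 2 : ℂ) *
      Complex.exp (Complex.I ^ 2 * ‖w‖ ^ 2 / (4 * b)) =
      ((π / b) ^ (Module.finrank ℝ V / 2 : ℝ) * exp (-(‖w‖ ^ 2 / (4 * b))) : ℝ) := by
    push_cast [Complex.ofReal_cpow (show 0 ≤ π / b by positivity)]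
    rw [Complex.I_sq, neg_one_mul, neg_div]
  have hb' : 0 < (b : ℂ).re := by simpa using hb
  simp_rw [hre]
  rw [ContinuousLinearMap.integral_comp_comm _
      (GaussianFourier.integrable_cexp_neg_mul_sq_norm_add hb' Complex.I w),
    GaussianFourier.integral_cexp_neg_mul_sq_norm_add hb', hvalue, Complex.reCLM_apply,
    Complex.ofReal_re]

lemma lintegral_exp_neg_mul_sq_norm_mul_one_sub_cos {b : ℝ} (hb : 0 < b) (w : V) :
    ∫⁻ h : V, ENNReal.ofReal (exp (-b * ‖h‖ ^ 2) * (1 - cos ⟪w, h⟫)) =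
      ENNReal.ofReal ((π / b) ^ (Module.finrank ℝ V / 2 : ℝ) *
        (1 - exp (-(‖w‖ ^ 2 / (4 * b))))) := by
  have hgauss := GaussianFourier.integral_rexp_neg_mul_sq_norm (V := V) hb
  have hexp : Integrable fun h : V => exp (-b * ‖h‖ ^ 2) :=
    .of_integral_ne_zero (by rw [hgauss]; positivity)
  have hcos : Integrable fun h : V => exp (-b * ‖h‖ ^ 2) * cos ⟪w, h⟫ :=
    hexp.mul_bdd (c := 1) (by fun_prop) (ae_of_all _ fun h => abs_cos_le_one _)
  simp only [mul_one_sub]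
  rw [← integral_exp_neg_mul_sq_norm_mul_cos hb, ← hgauss, ← integral_sub hexp hcos]
  refine (ofReal_integral_eq_lintegral_ofReal (hexp.sub hcos) (ae_of_all _ fun h => ?_)).symm
  exact sub_nonneg.2 (mul_le_of_le_one_right (exp_pos _).le (cos_le_one _))

lemma lintegral_one_sub_cos_div_norm_rpow {s : ℝ} (hs : s ∈ Set.Ioo (0 : ℝ) 1) (w : V) :
    ∫⁻ h : V, ENNReal.ofReal ((1 - cos ⟪w, h⟫) / ‖h‖ ^ ((Module.finrank ℝ V : ℝ) + 2 * s)) =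
      ENNReal.ofReal (‖w‖ ^ (2 * s) / (2 * cns (Module.finrank ℝ V) s)) := by
  set n := Module.finrank ℝ V with hn
  set a : ℝ := ((n : ℝ) + 2 * s) / 2 with ha
  have hs0 : 0 < s := hs.1
  have ha0 : 0 < a := by positivity
  have : 0 < Gamma a := Gamma_pos_of_pos ha0
  calc
    _ = ∫⁻ h : V, ∫⁻ t in Set.Ioi (0 : ℝ), ENNReal.ofReal (t ^ (-a - 1) / Gamma a) *
          ENNReal.ofReal (exp (-t⁻¹ * ‖h‖ ^ 2) * (1 - cos ⟪w, h⟫)) := by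
      refine lintegral_congr fun h => ?_
      rw [← ofReal_div_norm_rpow_eq_lintegral ha0 (by rintro rfl; simp), ha, mul_div_cancel₀]
      exact two_ne_zero
    _ = ∫⁻ t in Set.Ioi (0 : ℝ), ∫⁻ h : V, ENNReal.ofReal (t ^ (-a - 1) / Gamma a) *
          ENNReal.ofReal (exp (-t⁻¹ * ‖h‖ ^ 2) * (1 - cos ⟪w, h⟫)) :=
      lintegral_lintegral_swap (by fun_prop)
    _ = ∫⁻ t in Set.Ioi (0 : ℝ), ENNReal.ofReal (π ^ ((n : ℝ) / 2) / Gamma a) *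
          ENNReal.ofReal (t ^ (-s - 1) * (1 - exp (-(‖w‖ ^ 2 / 4 * t)))) := by
      refine setLIntegral_congr_fun measurableSet_Ioi fun t (ht : 0 < t) => ?_
      have hpow : t ^ (-s - 1) = t ^ (-a - 1) * t ^ ((n : ℝ) / 2) := by
        rw [← rpow_add ht, ha]
        ring_nf
      rw [lintegral_const_mul _ (by fun_prop),
        lintegral_exp_neg_mul_sq_norm_mul_one_sub_cos (inv_pos.2 ht), ← hn,
        ← ENNReal.ofReal_mul (by positivity), ← ENNReal.ofReal_mul (by positivity), hpow,
        div_inv_eq_mul, mul_rpow pi_pos.le ht.le]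
      field_simp
    _ = _ := by
      have hw : (‖w‖ ^ 2 / 4) ^ s = ‖w‖ ^ (2 * s) / 2 ^ (2 * s) := by
        rw [div_rpow (by positivity) (by positivity), rpow_mul (by positivity),
          rpow_mul (by positivity)]
        norm_num
      rw [lintegral_const_mul _ (by fun_prop),
        lintegral_rpow_mul_one_sub_exp_neg_mul_Ioi (by positivity) hs,
        ← ENNReal.ofReal_mul (by positivity), cns, ← ha, hw, neg_div, rpow_neg pi_pos.le,
        rpow_sub_one (by norm_num)]
      field_simp

end Symbol

lemma ae_eq_of_forall_integral_schwartz_smul_eq {E F : Type*} [NormedAddCommGroup E]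
    [NormedSpace ℝ E] [FiniteDimensional ℝ E] [MeasurableSpace E] [BorelSpace E]
    [NormedAddCommGroup F] [NormedSpace ℂ F] [CompleteSpace F] {μ : Measure E} {f g : E → F}
    (hf : LocallyIntegrable f μ) (hg : LocallyIntegrable g μ)
    (h : ∀ φ : SchwartzMap E ℂ, ∫ x, φ x • f x ∂μ = ∫ x, φ x • g x ∂μ) : f =ᵐ[μ] g := by
  refine ae_eq_of_integral_contDiff_smul_eq hf hg fun ρ hρ hρc => ?_
  have hρc' : HasCompactSupport (Complex.ofRealCLM ∘ ρ) := hρc.comp_left rfl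
  simpa using h (hρc'.toSchwartzMap (Complex.ofRealCLM.contDiff.comp hρ))

section Plancherel

variable {V F : Type*} [NormedAddCommGroup V] [InnerProductSpace ℝ V] [FiniteDimensional ℝ V]
  [MeasurableSpace V] [BorelSpace V] [NormedAddCommGroup F]

lemma integral_fourier_smul_eq_integral_smul_fourier [NormedSpace ℂ F] [CompleteSpace F]
    {φ : V → ℂ} {f : V → F} (hφ : Integrable φ) (hf : Integrable f) :
    ∫ ξ, 𝓕 φ ξ • f ξ = ∫ x, φ x • 𝓕 f x := by
  have h := VectorFourier.integral_fourierIntegral_smul_eq_flip (L := innerₗ V)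
    continuous_fourierChar continuous_inner hφ hf
  rwa [flip_innerₗ] at h

lemma continuous_fourier [NormedSpace ℂ F] {f : V → F} (hf : Integrable f) : Continuous (𝓕 f) :=
  VectorFourier.fourierIntegral_continuous continuous_fourierChar continuous_inner hf

lemma fourier_comp_add_right [NormedSpace ℂ F] (f : V → F) (h η : V) :
    𝓕 (fun x => f (x + h)) η = fourierChar ⟪h, η⟫ • 𝓕 f η :=
  congrFun (VectorFourier.fourierIntegral_comp_add_right fourierChar volume (innerₗ V) f h) η

lemma fourier_fun_sub [NormedSpace ℂ F] {f g : V → F} (hf : Integrable f) (hg : Integrable g)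
    (η : V) : 𝓕 (fun x => f x - g x) η = 𝓕 f η - 𝓕 g η := by
  simp only [fourier_eq, smul_sub]
  exact integral_sub ((fourierIntegral_convergent_iff η).2 hf)
    ((fourierIntegral_convergent_iff η).2 hg)

variable [InnerProductSpace ℂ F] [CompleteSpace F]

lemma integral_fourier_smul_eq_integral_smul_fourier_Lp (φ : SchwartzMap V ℂ)
    (g : Lp F 2 (volume : Measure V)) :
    ∫ ξ, 𝓕 φ ξ • g ξ = ∫ x, φ x • (𝓕 g : Lp F 2 (volume : Measure V)) x := by
  simpa using congr($(Lp.fourier_toTemperedDistribution_eq g) φ)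

lemma fourier_ae_eq_fourier_Lp_iff {f : V → F} (hf : Integrable f)
    (g : Lp F 2 (volume : Measure V)) :
    𝓕 f =ᵐ[volume] (𝓕 g : Lp F 2 (volume : Measure V)) ↔ f =ᵐ[volume] g := by
  have hlp (g : Lp F 2 (volume : Measure V)) : LocallyIntegrable g :=
    (Lp.memLp g).locallyIntegrable one_le_two
  have hflip (φ : SchwartzMap V ℂ) : ∫ x, 𝓕 φ x • f x = ∫ x, φ x • 𝓕 f x :=
    integral_fourier_smul_eq_integral_smul_fourier φ.integrable hf
  constructor <;> intro h
  · refine ae_eq_of_forall_integral_schwartz_smul_eq hf.locallyIntegrable (hlp g) fun φ => ?_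
    obtain ⟨ψ, rfl⟩ : ∃ ψ : SchwartzMap V ℂ, 𝓕 ψ = φ :=
      ⟨𝓕⁻ φ, FourierTransform.fourier_fourierInv_eq φ⟩
    rw [hflip, integral_fourier_smul_eq_integral_smul_fourier_Lp]
    exact integral_congr_ae (h.mono fun x hx => by simp only [hx])
  · refine ae_eq_of_forall_integral_schwartz_smul_eq (continuous_fourier hf).locallyIntegrable
      (hlp _) fun φ => ?_
    rw [← hflip, ← integral_fourier_smul_eq_integral_smul_fourier_Lp]
    exact integral_congr_ae (h.mono fun x hx => by simp only [hx])

lemma eLpNorm_fourier_Lp (g : Lp F 2 (volume : Measure V)) :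
    eLpNorm (𝓕 g : Lp F 2 (volume : Measure V)) 2 = eLpNorm g 2 := by
  rw [← Lp.enorm_def, ← Lp.enorm_def, enorm_eq_iff_norm_eq]
  exact Lp.norm_fourier_eq g

lemma eLpNorm_fourier_eq_of_memLp {f : V → F} (hf : Integrable f) (hf2 : MemLp f 2) :
    eLpNorm (𝓕 f) 2 = eLpNorm f 2 := by
  have hfg := hf2.coeFn_toLp.symm
  rw [eLpNorm_congr_ae hfg, eLpNorm_congr_ae ((fourier_ae_eq_fourier_Lp_iff hf _).2 hfg),
    eLpNorm_fourier_Lp]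

lemma memLp_two_of_memLp_two_fourier {f : V → F} (hf : Integrable f) (hF : MemLp (𝓕 f) 2) :
    MemLp f 2 := by
  obtain ⟨g, hg⟩ : ∃ g : Lp F 2 (volume : Measure V), 𝓕 g = hF.toLp (𝓕 f) :=
    ⟨𝓕⁻ (hF.toLp (𝓕 f)), FourierTransform.fourier_fourierInv_eq _⟩
  have hfg : 𝓕 f =ᵐ[volume] (𝓕 g : Lp F 2 (volume : Measure V)) := by
    rw [hg]
    exact hF.coeFn_toLp.symm
  exact (memLp_congr_ae ((fourier_ae_eq_fourier_Lp_iff hf g).1 hfg)).2 (Lp.memLp g)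

theorem eLpNorm_fourier_eq {f : V → F} (hf : Integrable f) :
    eLpNorm (𝓕 f) 2 = eLpNorm f 2 := by
  by_cases hf2 : MemLp f 2
  · exact eLpNorm_fourier_eq_of_memLp hf hf2
  have hF2 : ¬MemLp (𝓕 f) 2 := mt (memLp_two_of_memLp_two_fourier hf) hf2
  have hF : AEStronglyMeasurable (𝓕 f) := (continuous_fourier hf).aestronglyMeasurable
  rw [not_lt_top_iff.1 fun h => hf2 ⟨hf.1, h⟩, not_lt_top_iff.1 fun h => hF2 ⟨hF, h⟩]

lemma lintegral_norm_sq_fourier {f : V → F} (hf : Integrable f) :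
    ∫⁻ η, ENNReal.ofReal (‖𝓕 f η‖ ^ 2) = ∫⁻ x, ENNReal.ofReal (‖f x‖ ^ 2) := by
  have eLpNorm_sq (g : V → F) : eLpNorm g 2 ^ 2 = ∫⁻ x, ENNReal.ofReal (‖g x‖ ^ 2) := by
    simpa [ENNReal.ofReal_pow] using eLpNorm_nnreal_pow_eq_lintegral (f := g) (p := 2) two_ne_zero
  rw [← eLpNorm_sq, ← eLpNorm_sq, eLpNorm_fourier_eq hf]

end Plancherel

lemma lintegral_prod_eq_lintegral_lintegral_add {G : Type*} [AddGroup G] [MeasurableSpace G]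
    [MeasurableAdd₂ G] [MeasurableNeg G] (μ : Measure G) [SFinite μ] [μ.IsAddLeftInvariant]
    {Φ : G × G → ℝ≥0∞} (hΦ : AEMeasurable Φ (μ.prod μ)) :
    ∫⁻ p, Φ p ∂μ.prod μ = ∫⁻ h, ∫⁻ x, Φ (x, x + h) ∂μ ∂μ := by
  have hshear := measurePreserving_prod_add μ μ
  rw [← hshear.lintegral_comp_emb (MeasurableEquiv.shearAddRight G).measurableEmbedding]
  exact lintegral_prod_symm _ (hΦ.comp_quasiMeasurePreserving hshear.quasiMeasurePreserving)

lemma norm_one_sub_fourierChar_sq (t : ℝ) :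
    ‖(1 - fourierChar t : ℂ)‖ ^ 2 = 2 * (1 - cos (2 * π * t)) := by
  rw [fourierChar_apply, ← Complex.normSq_eq_norm_sq, Complex.normSq_apply]
  simp only [Complex.sub_re, Complex.sub_im, Complex.one_re, Complex.one_im,
    Complex.exp_ofReal_mul_I_re, Complex.exp_ofReal_mul_I_im]
  linear_combination sin_sq_add_cos_sq (2 * π * t)

section Gagliardo

variable {V F : Type*} [NormedAddCommGroup V] [InnerProductSpace ℝ V] [FiniteDimensional ℝ V]
  [MeasurableSpace V] [BorelSpace V] [NormedAddCommGroup F]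

lemma norm_fourier_sub_comp_add_right_sq [NormedSpace ℂ F] {u : V → F} (hu : Integrable u)
    (h η : V) :
    ‖𝓕 (fun x => u x - u (x + h)) η‖ ^ 2 =
      2 * (1 - cos ⟪(2 * π) • η, h⟫) * ‖𝓕 u η‖ ^ 2 := by
  rw [fourier_fun_sub hu (hu.comp_add_right h), fourier_comp_add_right, Circle.smul_def]
  nth_rw 1 [← one_smul ℂ (𝓕 u η)]
  rw [← sub_smul, norm_smul, mul_pow, norm_one_sub_fourierChar_sq, real_inner_smul_left,
    real_inner_comm]

variable [InnerProductSpace ℂ F] [CompleteSpace F]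

lemma lintegral_norm_sub_comp_add_right_sq {u : V → F} (hu : Integrable u) (h : V) :
    ∫⁻ x, ENNReal.ofReal (‖u x - u (x + h)‖ ^ 2) =
      ∫⁻ η, ENNReal.ofReal (2 * (1 - cos ⟪(2 * π) • η, h⟫) * ‖𝓕 u η‖ ^ 2) := by
  simp only [← norm_fourier_sub_comp_add_right_sq hu]
  exact (lintegral_norm_sq_fourier (hu.sub (hu.comp_add_right h))).symm

lemma lintegral_norm_sub_sq_div_eq_lintegral_fourier {s : ℝ} (hs : s ∈ Set.Ioo (0 : ℝ) 1)
    {u : V → F} (hu : Integrable u) :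
    ∫⁻ p : V × V, ENNReal.ofReal
        (‖u p.1 - u p.2‖ ^ 2 / ‖p.1 - p.2‖ ^ ((Module.finrank ℝ V : ℝ) + 2 * s)) =
      ∫⁻ η : V, ENNReal.ofReal
        (‖(2 * π) • η‖ ^ (2 * s) / cns (Module.finrank ℝ V) s * ‖𝓕 u η‖ ^ 2) := by
  set d : ℝ := (Module.finrank ℝ V : ℝ) + 2 * s with hd
  have hnonneg (h : V) : 0 ≤ (‖h‖ ^ d)⁻¹ := by positivity
  have hcont : Continuous (𝓕 u) := continuous_fourier hu
  have hmeas : AEMeasurable (fun p : V × V => ‖u p.1 - u p.2‖) :=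
    (hu.1.comp_fst.sub hu.1.comp_snd).norm.aemeasurable
  calc
    _ = ∫⁻ h : V, ∫⁻ x : V, ENNReal.ofReal (‖u x - u (x + h)‖ ^ 2 / ‖h‖ ^ d) := by
      rw [Measure.volume_eq_prod, lintegral_prod_eq_lintegral_lintegral_add _ (by fun_prop)]
      simp only [sub_add_cancel_left, norm_neg]
    _ = ∫⁻ h : V, ∫⁻ η : V, ENNReal.ofReal (2 * (1 - cos ⟪(2 * π) • η, h⟫) * ‖𝓕 u η‖ ^ 2) *
          ENNReal.ofReal (‖h‖ ^ d)⁻¹ := by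
      simp only [div_eq_mul_inv, ENNReal.ofReal_mul' (hnonneg _),
        lintegral_mul_const' _ _ ENNReal.ofReal_ne_top, lintegral_norm_sub_comp_add_right_sq hu]
    _ = ∫⁻ η : V, ∫⁻ h : V, ENNReal.ofReal (2 * (1 - cos ⟪(2 * π) • η, h⟫) * ‖𝓕 u η‖ ^ 2) *
          ENNReal.ofReal (‖h‖ ^ d)⁻¹ :=
      lintegral_lintegral_swap (by fun_prop)
    _ = ∫⁻ η : V, ENNReal.ofReal (2 * ‖𝓕 u η‖ ^ 2) *
          ∫⁻ h : V, ENNReal.ofReal ((1 - cos ⟪(2 * π) • η, h⟫) / ‖h‖ ^ d) := by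
      refine lintegral_congr fun η => ?_
      rw [← lintegral_const_mul' _ _ ENNReal.ofReal_ne_top]
      refine lintegral_congr fun h => ?_
      rw [← ENNReal.ofReal_mul' (hnonneg h), ← ENNReal.ofReal_mul (by positivity)]
      ring_nf
    _ = _ := by
      refine lintegral_congr fun η => ?_
      rw [hd, lintegral_one_sub_cos_div_norm_rpow hs, ← ENNReal.ofReal_mul (by positivity)]
      congr 1
      field_simp

end Gagliardo

lemma lintegral_eq_lintegral_comp_smul {E : Type*} [NormedAddCommGroup E] [NormedSpace ℝ E]
    [FiniteDimensional ℝ E] [MeasurableSpace E] [BorelSpace E] (μ : Measure E)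
    [μ.IsAddHaarMeasure] {r : ℝ} (hr : 0 < r) (g : E → ℝ≥0∞) :
    ∫⁻ x, g x ∂μ = ∫⁻ x, ENNReal.ofReal (r ^ Module.finrank ℝ E) * g (r • x) ∂μ := by
  have hemb : MeasurableEmbedding fun x : E => r • x :=
    (Homeomorph.smulOfNeZero r hr.ne').measurableEmbedding
  rw [lintegral_const_mul' _ _ ENNReal.ofReal_ne_top, ← hemb.lintegral_map,
    Measure.map_addHaar_smul _ hr.ne', lintegral_smul_measure, smul_eq_mul, ← mul_assoc,
    ← ENNReal.ofReal_mul (by positivity), abs_of_pos (by positivity),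
    mul_inv_cancel₀ (by positivity), ENNReal.ofReal_one, one_mul]

section Angular

variable {V F : Type*} [NormedAddCommGroup V] [InnerProductSpace ℝ V] [FiniteDimensional ℝ V]
  [MeasurableSpace V] [BorelSpace V] [NormedAddCommGroup F]

/-- The Fourier transform in the unitary angular-frequency convention
`(2π)^{-dim V / 2} ∫ e^{-i⟨ξ,x⟩} u(x) dx` of a vector-valued function on a Euclidean space. It
extends `FT` beyond scalar functions on `ℝⁿ`; Mathlib's `𝓕` has the frequency `2πξ` instead. -/
noncomputable def angularFourier [NormedSpace ℂ F] (u : V → F) (ξ : V) : F :=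
  (((2 * π) ^ (-(Module.finrank ℝ V : ℝ) / 2) : ℝ) : ℂ) •
    ∫ x, Complex.exp (-Complex.I * ((⟪ξ, x⟫ : ℝ) : ℂ)) • u x

lemma FT_eq_angularFourier {n : ℕ} (u : EuclideanSpace ℝ (Fin n) → ℂ) :
    FT u = angularFourier u := by
  ext ξ
  simp [FT, angularFourier]

lemma norm_angularFourier_two_pi_smul_sq [NormedSpace ℂ F] (u : V → F) (η : V) :
    ‖angularFourier u ((2 * π) • η)‖ ^ 2 =
      ((2 * π) ^ Module.finrank ℝ V)⁻¹ * ‖𝓕 u η‖ ^ 2 := by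
  have hint : ∫ x, Complex.exp (-Complex.I * ((⟪(2 * π) • η, x⟫ : ℝ) : ℂ)) • u x = 𝓕 u η := by
    rw [fourier_eq']
    refine integral_congr_ae (ae_of_all _ fun x => ?_)
    simp only [real_inner_smul_left, real_inner_comm x η]
    congr 2
    push_cast
    ring
  have hfactor : ((2 * π) ^ (-(Module.finrank ℝ V : ℝ) / 2)) ^ 2 =
      ((2 * π) ^ Module.finrank ℝ V)⁻¹ := by
    rw [← rpow_mul_natCast (by positivity), Nat.cast_ofNat, div_mul_cancel₀ _ two_ne_zero,
      rpow_neg (by positivity), rpow_natCast]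
  rw [angularFourier, hint, norm_smul, mul_pow, Complex.norm_real,
    norm_of_nonneg (by positivity), hfactor]

theorem stmt7_general [InnerProductSpace ℂ F] [CompleteSpace F] {s : ℝ}
    (hs : s ∈ Set.Ioo (0 : ℝ) 1) {u : V → F} (hu : Integrable u) :
    ∫⁻ ξ : V, ENNReal.ofReal (‖ξ‖ ^ (2 * s) * ‖angularFourier u ξ‖ ^ 2) =
      ENNReal.ofReal (cns (Module.finrank ℝ V) s) * ∫⁻ p : V × V, ENNReal.ofReal
        (‖u p.1 - u p.2‖ ^ 2 / ‖p.1 - p.2‖ ^ ((Module.finrank ℝ V : ℝ) + 2 * s)) := by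
  have hc := cns_pos (Module.finrank ℝ V) hs
  rw [lintegral_norm_sub_sq_div_eq_lintegral_fourier hs hu,
    ← lintegral_const_mul' _ _ ENNReal.ofReal_ne_top,
    lintegral_eq_lintegral_comp_smul volume two_pi_pos]
  refine lintegral_congr fun η => ?_
  rw [← ENNReal.ofReal_mul (by positivity), ← ENNReal.ofReal_mul hc.le,
    norm_angularFourier_two_pi_smul_sq]
  congr 1
  field_simp

end Angular

/-- For Schwartz `u` and `s ∈ (0,1)`,
`∫ |ξ|^{2s}|𝓕u(ξ)|² dξ = c_{n,s} ∬ |u(x)-u(y)|²/|x-y|^{n+2s} dx dy`. -/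
theorem stmt7 {n : ℕ} (hn : 1 ≤ n) (s : ℝ) (hs : s ∈ Set.Ioo (0 : ℝ) 1)
    (u : SchwartzMap (EuclideanSpace ℝ (Fin n)) ℂ) :
    (∫⁻ ξ : EuclideanSpace ℝ (Fin n),
        ENNReal.ofReal (‖ξ‖ ^ (2 * s) * ‖FT (⇑u) ξ‖ ^ 2)) =
    ENNReal.ofReal (cns n s) *
      ∫⁻ p : EuclideanSpace ℝ (Fin n) × EuclideanSpace ℝ (Fin n),
        ENNReal.ofReal (‖u p.1 - u p.2‖ ^ 2 / ‖p.1 - p.2‖ ^ ((n : ℝ) + 2 * s)) := by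
  simpa [FT_eq_angularFourier] using stmt7_general hs u.integrable
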